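/- Let f be C²-smooth on an open neighbourhood of S^{n-1} with ∫ f dσ_{n-1} = 0 and ‖f''_S(θ)‖ ≤ 1 for every θ ∈ S^{n-1}. Then log ∫ exp{ ((n−1)/2) f } dσ_{n-1} ≤ ((n−1)/2) ∫ |∇_S f|² dσ_{n-1}. -/

import Mathlib

open MeasureTheory Metric Filter
open scoped RealInnerProductSpace ENNReal NNReal

noncomputable section

namespace SecondOrderConc

/-- Euclidean space ℝⁿ. -/
abbrev E (n : ℕ) : Type := EuclideanSpace ℝ (Fin n)

/-- The uniform (normalized rotation-invariant) probability measure `σ_{n-1}`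
on the unit sphere `S^{n-1}`, viewed as a measure on the ambient space ℝⁿ. -/
def sphMeasure (n : ℕ) : Measure (E n) :=
  ((((volume : Measure (E n)).toSphere).map Subtype.val) Set.univ)⁻¹ •
    (((volume : Measure (E n)).toSphere).map Subtype.val)

variable {n : ℕ}

/-- Euclidean Hessian of `f` at `x`, as a continuous linear operator on ℝⁿ. -/
def hess (f : E n → ℝ) (x : E n) : E n →L[ℝ] E n :=
  fderiv ℝ (gradient f) x

/-- Squared Hilbert–Schmidt norm of an operator on ℝⁿ. -/
def hsNormSq (A : E n →L[ℝ] E n) : ℝ :=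
  ∑ i : Fin n, ‖A (EuclideanSpace.single i 1)‖ ^ 2

/-- Orthogonal projection of ℝⁿ onto `θ^⊥` (for a unit vector `θ`). -/
def projPerp (θ : E n) : E n →L[ℝ] E n :=
  ContinuousLinearMap.id ℝ (E n) - (innerSL ℝ θ).smulRight θ

/-- Spherical gradient `∇_S f(θ) = ∇f(θ) − ⟨∇f(θ),θ⟩θ`. -/
def sgrad (f : E n → ℝ) (θ : E n) : E n :=
  gradient f θ - ⟪gradient f θ, θ⟫ • θ

/-- Spherical Hessian `f''_S(θ) = P_{θ^⊥} (f''(θ) − ⟨∇f(θ),θ⟩ I_n) P_{θ^⊥}`. -/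
def sHess (f : E n → ℝ) (θ : E n) : E n →L[ℝ] E n :=
  (projPerp θ).comp
    ((hess f θ - ⟪gradient f θ, θ⟫ • ContinuousLinearMap.id ℝ (E n)).comp (projPerp θ))

/-- Spherical Laplacian `Δ_S f(θ) = Tr f''_S(θ)`. -/
def sLap (f : E n → ℝ) (θ : E n) : ℝ :=
  LinearMap.trace ℝ (E n) (sHess f θ).toLinearMap

/-- Euclidean Laplacian `Δ f = Tr f''`. -/
def eLap (f : E n → ℝ) (x : E n) : ℝ :=
  LinearMap.trace ℝ (E n) (hess f x).toLinearMap

/-- 0-homogeneous extension to `ℝⁿ \ {0}` of (the restriction to the sphere of) `g`. -/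
def ext0 (g : E n → ℝ) : E n → ℝ := fun x => g (‖x‖⁻¹ • x)

/-- One-dimensional Brunn–Minkowski inequality. -/
theorem volume_add_volume_le_of_add_mem {A B C : Set ℝ} (hA : MeasurableSet A)
    (hB : MeasurableSet B) (hA' : A.Nonempty) (hB' : B.Nonempty)
    (h : ∀ a ∈ A, ∀ b ∈ B, a + b ∈ C) : volume A + volume B ≤ volume C := by
  have translate (K : Set ℝ) (m : ℝ) : volume ((fun x => x + m) '' K) = volume K := by
    rw [Set.image_add_right, measure_preimage_add_right]
  by_contra! hlt
  rcases eq_or_ne (volume A) 0 with h0 | h0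
  · obtain ⟨a, ha⟩ := hA'
    rw [h0, zero_add, ← translate B a] at hlt
    refine hlt.not_ge (measure_mono ?_)
    rintro _ ⟨b, hb, rfl⟩
    simpa [add_comm] using h a ha b hb
  rcases eq_or_ne (volume B) 0 with h1 | h1
  · obtain ⟨b, hb⟩ := hB'
    rw [h1, add_zero, ← translate A b] at hlt
    refine hlt.not_ge (measure_mono ?_)
    rintro _ ⟨a, ha, rfl⟩
    exact h a ha b hb
  obtain ⟨r, hr, s, hs, hrs⟩ := ENNReal.exists_lt_add_of_lt_add hlt h0 h1
  obtain ⟨K, hKA, hK, hrK⟩ := hA.exists_lt_isCompact hr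
  obtain ⟨L, hLB, hL, hsL⟩ := hB.exists_lt_isCompact hs
  have hKne : K.Nonempty := by
    rw [Set.nonempty_iff_ne_empty]; rintro rfl; simp at hrK
  have hLne : L.Nonempty := by
    rw [Set.nonempty_iff_ne_empty]; rintro rfl; simp at hsL
  obtain ⟨p, hpK, hp⟩ := hK.exists_isGreatest hKne
  obtain ⟨q, hqL, hq⟩ := hL.exists_isLeast hLne
  refine (hrs.trans_le (add_le_add hrK.le hsL.le)).not_ge ?_
  rw [← translate K q, ← translate L p, ← measure_union₀]
  · refine measure_mono (Set.union_subset ?_ ?_)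
    · rintro _ ⟨a, ha, rfl⟩
      exact h a (hKA ha) q (hLB hqL)
    · rintro _ ⟨b, hb, rfl⟩
      simpa [add_comm] using h p (hKA hpK) b (hLB hb)
  · exact (hL.image (by fun_prop)).measurableSet.nullMeasurableSet
  · refine measure_mono_null (t := {p + q}) ?_ (by simp)
    rintro _ ⟨⟨a, ha, rfl⟩, ⟨b, hb, hab⟩⟩
    have h1 := hp ha
    have h2 := hq hb
    simp only [Set.mem_singleton_iff] at *
    linarith

theorem lintegral_min_one_eq {α : Type*} [MeasurableSpace α] (μ : Measure α) {h : α → ℝ≥0∞}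
    (hh : Measurable h) :
    ∫⁻ x, min (h x) 1 ∂μ = ∫⁻ s in Set.Ioo (0 : ℝ) 1, μ {x | ENNReal.ofReal s < h x} := by
  have key := lintegral_eq_lintegral_meas_lt μ (f := fun x => (min (h x) 1).toReal)
    (Eventually.of_forall fun x => ENNReal.toReal_nonneg)
    (hh.min measurable_const).ennreal_toReal.aemeasurable
  have hfin (x : α) : min (h x) 1 ≠ ∞ := ne_top_of_le_ne_top ENNReal.one_ne_top (min_le_right _ _)
  simp only [ENNReal.ofReal_toReal (hfin _)] at key
  rw [key, ← Set.Ioo_union_Ici_eq_Ioi (zero_lt_one' ℝ),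
    lintegral_union measurableSet_Ici
      (Set.disjoint_left.2 fun x hx hx' => absurd hx.2 (not_lt.2 hx'))]
  have h1 : ∫⁻ s in Set.Ici (1 : ℝ), μ {x | s < (min (h x) 1).toReal} = 0 := by
    rw [setLIntegral_congr_fun (g := fun _ => 0) measurableSet_Ici, lintegral_zero]
    intro s hs
    have : {x | s < (min (h x) 1).toReal} = ∅ := by
      ext x
      simp only [Set.mem_ofPred_eq, Set.mem_empty_iff_false, iff_false, not_lt]
      refine le_trans ?_ (Set.mem_Ici.1 hs)
      simpa using ENNReal.toReal_mono ENNReal.one_ne_top (min_le_right (h x) 1)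
    simp [this]
  rw [h1, add_zero]
  refine setLIntegral_congr_fun measurableSet_Ioo fun s hs => ?_
  congr 1
  ext x
  simp only [Set.mem_ofPred_eq]
  rw [← ENNReal.ofReal_lt_iff_lt_toReal hs.1.le (hfin x), lt_min_iff, and_iff_left]
  simpa using hs.2

theorem rpow_mul_rpow_le_add {t : ℝ} (ht : 0 < t) (ht' : t < 1) (a b : ℝ≥0∞) :
    a ^ t * b ^ (1 - t) ≤ ENNReal.ofReal t * a + ENNReal.ofReal (1 - t) * b := by
  have ht1 : 0 < 1 - t := by linarith
  have h := ENNReal.young_inequality (a ^ t) (b ^ (1 - t)) (p := t⁻¹) (q := (1 - t)⁻¹)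
    (by
      rw [Real.holderConjugate_iff]
      refine ⟨(one_lt_inv₀ ht).2 ht', by simp⟩)
  rw [← ENNReal.rpow_mul, ← ENNReal.rpow_mul, mul_inv_cancel₀ ht.ne', mul_inv_cancel₀ ht1.ne',
    ENNReal.rpow_one, ENNReal.rpow_one, ENNReal.ofReal_inv_of_pos ht,
    ENNReal.ofReal_inv_of_pos ht1, div_eq_mul_inv, div_eq_mul_inv, inv_inv, inv_inv] at h
  simpa [mul_comm] using h

theorem volume_div_preimage {t : ℝ} (ht : 0 < t) (s : Set ℝ) :
    volume ((fun x => x / t) ⁻¹' s) = ENNReal.ofReal t * volume s := by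
  have := Real.volume_preimage_mul_left (inv_ne_zero ht.ne') s
  simpa [abs_of_pos ht, div_eq_inv_mul] using this

/-- One-dimensional Prékopa–Leindler for functions of supremum one, with arithmetic mean. -/
theorem prekopa_leindler_real_of_sup_eq_one {t : ℝ} (ht : 0 < t) (ht' : t < 1)
    {u v h : ℝ → ℝ≥0∞} (hu : Measurable u) (hv : Measurable v) (hh : Measurable h)
    (hu1 : ⨆ x, u x = 1) (hv1 : ⨆ x, v x = 1)
    (H : ∀ x y, u x ^ t * v y ^ (1 - t) ≤ h (t * x + (1 - t) * y)) :
    ENNReal.ofReal t * (∫⁻ x, u x) + ENNReal.ofReal (1 - t) * (∫⁻ x, v x) ≤ ∫⁻ x, h x := by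
  have ht1 : 0 < 1 - t := by linarith
  have eu (x) : min (u x) 1 = u x := min_eq_left (hu1 ▸ le_iSup u x)
  have ev (x) : min (v x) 1 = v x := min_eq_left (hv1 ▸ le_iSup v x)
  have lu := lintegral_min_one_eq volume hu
  have lv := lintegral_min_one_eq volume hv
  have lh := lintegral_min_one_eq volume hh
  simp only [eu] at lu
  simp only [ev] at lv
  refine le_trans ?_ (lintegral_mono fun x => min_le_left (h x) 1)
  rw [lu, lv, lh, ← lintegral_const_mul' _ _ ENNReal.ofReal_ne_top,
    ← lintegral_const_mul' _ _ ENNReal.ofReal_ne_top]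
  refine (le_lintegral_add _ _).trans (setLIntegral_mono' measurableSet_Ioo fun s hs => ?_)
  have hs1 : ENNReal.ofReal s < 1 := by simpa using hs.2
  rw [← volume_div_preimage ht, ← volume_div_preimage ht1]
  have hne {w : ℝ → ℝ≥0∞} (hw : ⨆ x, w x = 1) {r : ℝ} (hr : 0 < r) :
      ((fun x => x / r) ⁻¹' {x | ENNReal.ofReal s < w x}).Nonempty := by
    obtain ⟨x, hx⟩ := lt_iSup_iff.1 (hw ▸ hs1)
    exact ⟨r * x, by simpa [mul_div_cancel_left₀ _ hr.ne'] using hx⟩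
  refine volume_add_volume_le_of_add_mem
    ((measurable_id.div_const t) (measurableSet_lt measurable_const hu))
    ((measurable_id.div_const (1 - t)) (measurableSet_lt measurable_const hv))
    (hne hu1 ht) (hne hv1 ht1) fun a ha b hb => ?_
  simp only [Set.mem_preimage, Set.mem_ofPred_eq] at ha hb ⊢
  have := H (a / t) (b / (1 - t))
  rw [mul_div_cancel₀ _ ht.ne', mul_div_cancel₀ _ ht1.ne'] at this
  refine lt_of_lt_of_le ?_ this
  calc ENNReal.ofReal s = ENNReal.ofReal s ^ t * ENNReal.ofReal s ^ (1 - t) := by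
        rw [← ENNReal.rpow_add _ _ (by simpa using hs.1) ENNReal.ofReal_ne_top]; simp
    _ < _ := ENNReal.mul_lt_mul (ENNReal.rpow_lt_rpow ha ht) (ENNReal.rpow_lt_rpow hb ht1)

/-- One-dimensional Prékopa–Leindler inequality for functions with finite supremum. -/
theorem prekopa_leindler_real_of_sup_ne_top {t : ℝ} (ht : 0 < t) (ht' : t < 1)
    {u v h : ℝ → ℝ≥0∞} (hu : Measurable u) (hv : Measurable v) (hh : Measurable h)
    (hu1 : ⨆ x, u x ≠ ∞) (hv1 : ⨆ x, v x ≠ ∞)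
    (H : ∀ x y, u x ^ t * v y ^ (1 - t) ≤ h (t * x + (1 - t) * y)) :
    (∫⁻ x, u x) ^ t * (∫⁻ x, v x) ^ (1 - t) ≤ ∫⁻ x, h x := by
  have ht1 : 0 < 1 - t := by linarith
  rcases eq_or_ne (⨆ x, u x) 0 with hu0 | hu0
  · simp [ENNReal.iSup_eq_zero.1 hu0, ht]
  rcases eq_or_ne (⨆ x, v x) 0 with hv0 | hv0
  · simp [ENNReal.iSup_eq_zero.1 hv0, ht1]
  set a := ⨆ x, u x with ha
  set b := ⨆ x, v x with hb
  have hc0 : a ^ t * b ^ (1 - t) ≠ 0 := by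
    simp [hu0, hv0, hu1, hv1, ENNReal.rpow_eq_zero_iff]
  have hc1 : a ^ t * b ^ (1 - t) ≠ ∞ :=
    ENNReal.mul_ne_top (ENNReal.rpow_ne_top_of_nonneg ht.le hu1)
      (ENNReal.rpow_ne_top_of_nonneg ht1.le hv1)
  have key := prekopa_leindler_real_of_sup_eq_one ht ht' (u := fun x => a⁻¹ * u x)
    (v := fun x => b⁻¹ * v x) (h := fun x => (a ^ t * b ^ (1 - t))⁻¹ * h x)
    (hu.const_mul _) (hv.const_mul _) (hh.const_mul _)
    (by rw [← ENNReal.mul_iSup, ENNReal.inv_mul_cancel hu0 hu1])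
    (by rw [← ENNReal.mul_iSup, ENNReal.inv_mul_cancel hv0 hv1])
    (fun x y => by
      refine le_trans (le_of_eq ?_) (mul_le_mul_right (H x y) _)
      rw [ENNReal.mul_rpow_of_nonneg _ _ ht.le, ENNReal.mul_rpow_of_nonneg _ _ ht1.le,
        ENNReal.mul_inv (.inr (ENNReal.rpow_ne_top_of_nonneg ht1.le hv1))
          (.inl (ENNReal.rpow_ne_top_of_nonneg ht.le hu1)),
        ENNReal.inv_rpow, ENNReal.inv_rpow]
      ring)
  rw [lintegral_const_mul _ hu, lintegral_const_mul _ hv, lintegral_const_mul _ hh] at key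
  have key' := (rpow_mul_rpow_le_add ht ht' _ _).trans key
  rw [← ENNReal.div_eq_inv_mul, ← ENNReal.div_eq_inv_mul, ← ENNReal.div_eq_inv_mul,
    ENNReal.div_rpow_of_nonneg _ _ ht.le, ENNReal.div_rpow_of_nonneg _ _ ht1.le,
    ENNReal.le_div_iff_mul_le (.inl hc0) (.inl hc1)] at key'
  refine le_trans (le_of_eq ?_) key'
  have e1 : a ^ t ≠ 0 := by simp [ENNReal.rpow_eq_zero_iff, hu0, hu1]
  have e2 : b ^ (1 - t) ≠ 0 := by simp [ENNReal.rpow_eq_zero_iff, hv0, hv1]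
  rw [mul_mul_mul_comm, ENNReal.div_mul_cancel e1 (ENNReal.rpow_ne_top_of_nonneg ht.le hu1),
    ENNReal.div_mul_cancel e2 (ENNReal.rpow_ne_top_of_nonneg ht1.le hv1)]

theorem tendsto_lintegral_min_natCast {α : Type*} [MeasurableSpace α] (μ : Measure α)
    {u : α → ℝ≥0∞} (hu : Measurable u) :
    Tendsto (fun N : ℕ => ∫⁻ x, min (u x) N ∂μ) atTop (nhds (∫⁻ x, u x ∂μ)) := by
  refine lintegral_tendsto_of_tendsto_of_monotone
    (fun N => (hu.min measurable_const).aemeasurable)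
    (Eventually.of_forall fun x M N hMN => by dsimp only; gcongr)
    (Eventually.of_forall fun x => ?_)
  have := (tendsto_const_nhds (x := u x)).min ENNReal.tendsto_nat_nhds_top
  simpa using this

/-- One-dimensional Prékopa–Leindler inequality. -/
theorem prekopa_leindler_real {t : ℝ} (ht : 0 < t) (ht' : t < 1)
    {u v h : ℝ → ℝ≥0∞} (hu : Measurable u) (hv : Measurable v) (hh : Measurable h)
    (H : ∀ x y, u x ^ t * v y ^ (1 - t) ≤ h (t * x + (1 - t) * y)) :
    (∫⁻ x, u x) ^ t * (∫⁻ x, v x) ^ (1 - t) ≤ ∫⁻ x, h x := by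
  have ht1 : 0 < 1 - t := by linarith
  rcases eq_or_ne (∫⁻ x, u x) 0 with hu0 | hu0
  · simp [hu0, ht]
  rcases eq_or_ne (∫⁻ x, v x) 0 with hv0 | hv0
  · simp [hv0, ht1]
  refine le_of_tendsto' (ENNReal.Tendsto.mul
    ((tendsto_lintegral_min_natCast volume hu).ennrpow_const t)
    (.inl (by simp [ENNReal.rpow_eq_zero_iff, hu0, not_lt.2 ht.le]))
    ((tendsto_lintegral_min_natCast volume hv).ennrpow_const (1 - t))
    (.inl (by simp [ENNReal.rpow_eq_zero_iff, hv0, not_lt.2 ht'.le]))) fun N => ?_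
  have hfin (w : ℝ → ℝ≥0∞) : ⨆ x, min (w x) (N : ℝ≥0∞) ≠ ∞ :=
    ne_top_of_le_ne_top (ENNReal.natCast_ne_top N) (iSup_le fun x => min_le_right _ _)
  refine prekopa_leindler_real_of_sup_ne_top ht ht' (hu.min measurable_const)
    (hv.min measurable_const) hh (hfin u) (hfin v) fun x y => le_trans ?_ (H x y)
  gcongr
  · exact min_le_left _ _
  · exact min_le_left _ _

/-- Prékopa–Leindler inequality. -/
theorem prekopa_leindler {t : ℝ} (ht : 0 < t) (ht' : t < 1) (n : ℕ)
    {u v h : (Fin n → ℝ) → ℝ≥0∞} (hu : Measurable u) (hv : Measurable v) (hh : Measurable h)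
    (H : ∀ x y, u x ^ t * v y ^ (1 - t) ≤ h (t • x + (1 - t) • y)) :
    (∫⁻ x, u x) ^ t * (∫⁻ x, v x) ^ (1 - t) ≤ ∫⁻ x, h x := by
  induction n with
  | zero =>
    have hint (w : (Fin 0 → ℝ) → ℝ≥0∞) : ∫⁻ x, w x = w default := by
      rw [lintegral_unique]; simp only [volume_pi, Measure.pi_univ, Finset.univ_eq_empty,
        Finset.prod_empty, mul_one]
      exact congrArg w (Subsingleton.elim _ _)
    rw [hint, hint, hint]
    convert H default default
  | succ n ih =>
    have cons_eq : (fun p : ℝ × (Fin n → ℝ) => (Fin.cons p.1 p.2 : Fin (n + 1) → ℝ)) =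
        (MeasurableEquiv.piFinSuccAbove (fun _ : Fin (n + 1) => ℝ) 0).symm := by
      ext p i
      refine Fin.cases ?_ (fun j => ?_) i <;> simp [MeasurableEquiv.piFinSuccAbove]
    have fubini {w : (Fin (n + 1) → ℝ) → ℝ≥0∞} (hw : Measurable w) :
        ∫⁻ x, w x = ∫⁻ a : ℝ, ∫⁻ z : Fin n → ℝ, w (Fin.cons a z) := by
      have hmp := (volume_preserving_piFinSuccAbove (fun _ : Fin (n + 1) => ℝ) 0).symm
      rw [← hmp.lintegral_comp hw, Measure.volume_eq_prod, lintegral_prod]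
      · simp_rw [← cons_eq]
      · exact (hw.comp (MeasurableEquiv.measurable _)).aemeasurable
    have cons_meas : Measurable fun p : ℝ × (Fin n → ℝ) =>
        (Fin.cons p.1 p.2 : Fin (n + 1) → ℝ) :=
      cons_eq ▸ (MeasurableEquiv.piFinSuccAbove (fun _ : Fin (n + 1) => ℝ) 0).symm.measurable
    rw [fubini hu, fubini hv, fubini hh]
    refine prekopa_leindler_real ht ht' (hu.comp cons_meas).lintegral_prod_right'
      (hv.comp cons_meas).lintegral_prod_right' (hh.comp cons_meas).lintegral_prod_right'
      fun a b => ?_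
    refine ih (hu.comp (cons_meas.comp measurable_prodMk_left))
      (hv.comp (cons_meas.comp measurable_prodMk_left))
      (hh.comp (cons_meas.comp measurable_prodMk_left)) fun x y => ?_
    refine (H _ _).trans_eq ?_
    congr 1
    ext i
    refine Fin.cases ?_ (fun j => ?_) i <;> simp

/-- Multiplicative Brunn–Minkowski inequality in Euclidean space. -/
theorem brunn_minkowski_euclideanSpace {t : ℝ} (ht : 0 < t) (ht' : t < 1) {n : ℕ}
    {A B C : Set (EuclideanSpace ℝ (Fin n))} (hA : MeasurableSet A) (hB : MeasurableSet B)
    (hC : MeasurableSet C) (h : ∀ x ∈ A, ∀ y ∈ B, t • x + (1 - t) • y ∈ C) :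
    volume A ^ t * volume B ^ (1 - t) ≤ volume C := by
  have ht1 : 0 < 1 - t := by linarith
  let e := MeasurableEquiv.toLp 2 (Fin n → ℝ)
  have hvol {S : Set (EuclideanSpace ℝ (Fin n))} (hS : MeasurableSet S) :
      volume S = ∫⁻ x : Fin n → ℝ, (e ⁻¹' S).indicator 1 x := by
    rw [lintegral_indicator_one (e.measurable hS)]
    exact ((EuclideanSpace.volume_preserving_symm_measurableEquiv_toLp (Fin n)).symm.measure_preimage
      hS.nullMeasurableSet).symm
  rw [hvol hA, hvol hB, hvol hC]
  refine prekopa_leindler ht ht' n (measurable_one.indicator (e.measurable hA))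
    (measurable_one.indicator (e.measurable hB)) (measurable_one.indicator (e.measurable hC))
    fun x y => ?_
  by_cases hx : e x ∈ A
  · by_cases hy : e y ∈ B
    · have := h _ hx _ hy
      have hz : t • x + (1 - t) • y ∈ e ⁻¹' C := this
      rw [Set.indicator_of_mem hz]
      simp [Set.indicator, hx, hy]
    · simp [Set.indicator, hy, ht1]
  · simp [Set.indicator, hx, ht]

/-- The open star body with radial function `k`, with the origin removed. -/
def starBody {n : ℕ} (k : sphere (0 : E n) 1 → ℝ) : Set (E n) :=
  {x | ∃ θ : sphere (0 : E n) 1, ∃ r : ℝ, 0 < r ∧ r < k θ ∧ x = r • (θ : E n)}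

/-- The uniform probability measure on the unit sphere, as a subtype. -/
def unifSphere (n : ℕ) : Measure (sphere (0 : E n) 1) :=
  ((volume : Measure (E n)).toSphere Set.univ)⁻¹ • (volume : Measure (E n)).toSphere

theorem sphMeasure_eq_map (n : ℕ) : sphMeasure n = (unifSphere n).map Subtype.val := by
  rw [sphMeasure, unifSphere, Measure.map_smul,
    Measure.map_apply measurable_subtype_coe MeasurableSet.univ, Set.preimage_univ]

theorem integral_sphMeasure {n : ℕ} (g : E n → ℝ) :
    ∫ θ, g θ ∂sphMeasure n = ∫ θ : sphere (0 : E n) 1, g θ ∂unifSphere n := by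
  rw [sphMeasure_eq_map]
  exact (MeasurableEmbedding.subtype_coe isClosed_sphere.measurableSet).integral_map g

theorem toSphere_univ_ne_zero {n : ℕ} (hn : n ≠ 0) :
    (volume : Measure (E n)).toSphere Set.univ ≠ 0 := by
  have : NeZero n := ⟨hn⟩
  exact Measure.measure_univ_ne_zero.2 (Measure.toSphere_ne_zero _)

theorem isProbabilityMeasure_unifSphere {n : ℕ} (hn : n ≠ 0) :
    IsProbabilityMeasure (unifSphere n) :=
  ⟨by
    rw [unifSphere, Measure.smul_apply, smul_eq_mul]
    exact ENNReal.inv_mul_cancel (toSphere_univ_ne_zero hn) (measure_ne_top _ _)⟩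

theorem starBody_eq_image {n : ℕ} (k : sphere (0 : E n) 1 → ℝ) :
    starBody k = Subtype.val '' (homeomorphUnitSphereProd (E n) ⁻¹' {p | (p.2 : ℝ) < k p.1}) := by
  ext x
  constructor
  · rintro ⟨θ, r, hr, hrk, rfl⟩
    refine ⟨(homeomorphUnitSphereProd (E n)).symm (θ, ⟨r, hr⟩), ?_, by simp⟩
    rw [Set.mem_preimage, Homeomorph.apply_symm_apply]
    exact hrk
  · rintro ⟨y, hy, rfl⟩
    refine ⟨(homeomorphUnitSphereProd (E n) y).1, (homeomorphUnitSphereProd (E n) y).2,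
      (homeomorphUnitSphereProd (E n) y).2.2, hy, ?_⟩
    simp [smul_smul, mul_inv_cancel₀ (norm_ne_zero_iff.2 y.2)]

theorem measurableSet_radial_lt {n : ℕ} {k : sphere (0 : E n) 1 → ℝ} (hk : Measurable k) :
    MeasurableSet {p : sphere (0 : E n) 1 × Set.Ioi (0 : ℝ) | (p.2 : ℝ) < k p.1} :=
  measurableSet_lt (measurable_subtype_coe.comp measurable_snd) (hk.comp measurable_fst)

theorem measurableSet_starBody {n : ℕ} {k : sphere (0 : E n) 1 → ℝ} (hk : Measurable k) :
    MeasurableSet (starBody k) := by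
  rw [starBody_eq_image]
  exact (MeasurableEmbedding.subtype_coe (measurableSet_singleton _).compl).measurableSet_image.2
    ((homeomorphUnitSphereProd (E n)).measurable (measurableSet_radial_lt hk))

theorem volume_starBody {n : ℕ} (hn : n ≠ 0) {k : sphere (0 : E n) 1 → ℝ} (hk : Measurable k)
    (hk0 : ∀ θ, 0 < k θ) :
    volume (starBody k) =
      volume (ball (0 : E n) 1) * ∫⁻ θ, ENNReal.ofReal (k θ ^ n) ∂unifSphere n := by
  have hmp := (volume : Measure (E n)).measurePreserving_homeomorphUnitSphereProd
  have hT := measurableSet_radial_lt hk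
  rw [starBody_eq_image,
    ← comap_subtype_coe_apply (measurableSet_singleton _).compl,
    hmp.measure_preimage hT.nullMeasurableSet, Measure.prod_apply hT]
  have hfib (θ : sphere (0 : E n) 1) : Measure.volumeIoiPow (Module.finrank ℝ (E n) - 1)
      (Prod.mk θ ⁻¹' {p | (p.2 : ℝ) < k p.1}) =
        (n : ℝ≥0∞)⁻¹ * ENNReal.ofReal (k θ ^ n) := by
    have : (Prod.mk θ ⁻¹' {p : sphere (0 : E n) 1 × Set.Ioi (0 : ℝ) | (p.2 : ℝ) < k p.1}) =
        Set.Iio ⟨k θ, hk0 θ⟩ := by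
      ext r; exact Iff.rfl
    rw [this, Measure.volumeIoiPow_apply_Iio, finrank_euclideanSpace_fin]
    obtain ⟨m, rfl⟩ := Nat.exists_eq_succ_of_ne_zero hn
    rw [div_eq_inv_mul, ENNReal.ofReal_mul (by positivity), ENNReal.ofReal_inv_of_pos (by positivity)]
    congr 2
    simp only [Nat.succ_sub_one, Nat.succ_eq_add_one]
    rw [← Nat.cast_succ, ENNReal.ofReal_natCast]
  simp_rw [hfib]
  have hn' : (n : ℝ≥0∞) ≠ 0 := by exact_mod_cast hn
  rw [lintegral_const_mul _ (by fun_prop), unifSphere, lintegral_smul_measure,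
    Measure.toSphere_apply_univ, finrank_euclideanSpace_fin, smul_eq_mul,
    ENNReal.mul_inv (.inl hn') (.inl (ENNReal.natCast_ne_top n)), ← mul_assoc, ← mul_assoc]
  congr 1
  rw [mul_right_comm, ENNReal.mul_inv_cancel
    (measure_ball_pos _ _ one_pos).ne' measure_ball_lt_top.ne, one_mul]

theorem integrable_of_continuous_sphere {n : ℕ} (hn : n ≠ 0) {g : sphere (0 : E n) 1 → ℝ}
    (hg : Continuous g) : Integrable g (unifSphere n) := by
  have := isProbabilityMeasure_unifSphere hn
  exact hg.integrable_of_hasCompactSupport (HasCompactSupport.of_compactSpace g)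

/-- Brunn–Minkowski for star bodies whose combination lies in the unit ball. -/
theorem integral_pow_le_one_of_combination_mem_closedBall {n : ℕ} (hn : n ≠ 0) {t : ℝ}
    (ht : 0 < t) (ht' : t < 1) {a k : sphere (0 : E n) 1 → ℝ} (ha : Continuous a)
    (hk : Continuous k) (ha0 : ∀ θ, 0 < a θ) (hk0 : ∀ θ, 0 < k θ)
    (hk1 : ∫ θ, k θ ^ n ∂unifSphere n = 1)
    (h : ∀ x ∈ starBody a, ∀ y ∈ starBody k, ‖(1 - t) • x + t • y‖ ≤ 1) :
    ∫ θ, a θ ^ n ∂unifSphere n ≤ 1 := by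
  have ht1 : 0 < 1 - t := by linarith
  have hvol {b : sphere (0 : E n) 1 → ℝ} (hb : Continuous b) (hb0 : ∀ θ, 0 < b θ) :
      volume (starBody b) =
        volume (ball (0 : E n) 1) * ENNReal.ofReal (∫ θ, b θ ^ n ∂unifSphere n) := by
    rw [volume_starBody hn hb.measurable hb0, ofReal_integral_eq_lintegral_ofReal
      (integrable_of_continuous_sphere hn (by fun_prop))
      (Eventually.of_forall fun θ => pow_nonneg (hb0 θ).le n)]
  have bm := brunn_minkowski_euclideanSpace (t := 1 - t) ht1 (by linarith)
    (measurableSet_starBody ha.measurable) (measurableSet_starBody hk.measurable)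
    (isClosed_closedBall (x := (0 : E n)) (ε := 1)).measurableSet fun x hx y hy => by
      simpa using h x hx y hy
  rw [sub_sub_cancel, hvol hk hk0, hk1, hvol ha ha0, ENNReal.ofReal_one, mul_one,
    Measure.addHaar_unitClosedBall_eq_addHaar_unitBall, ENNReal.mul_rpow_of_nonneg _ _ ht1.le,
    mul_right_comm, ← ENNReal.rpow_add _ _ (measure_ball_pos _ _ one_pos).ne'
      measure_ball_lt_top.ne, sub_add_cancel, ENNReal.rpow_one] at bm
  nth_rewrite 2 [← mul_one (volume (ball (0 : E n) 1))] at bm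
  rw [ENNReal.mul_le_mul_iff_right (measure_ball_pos _ _ one_pos).ne'
      measure_ball_lt_top.ne] at bm
  by_contra! hlt
  exact bm.not_gt (ENNReal.one_lt_rpow (by simpa using hlt) ht1)

theorem norm_combination_le_one {n : ℕ} {t M : ℝ} (ht : 0 < t) (ht' : t < 1)
    {k H a : sphere (0 : E n) 1 → ℝ} (hk0 : ∀ θ, 0 < k θ) (hkM : ∀ θ, k θ ≤ M)
    (hkH : ∀ η θ : sphere (0 : E n) 1, ⟪(η : E n), (θ : E n)⟫ * k θ ≤ H η)
    (htM : t * M ≤ 1) (hH0 : ∀ θ, 0 ≤ H θ)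
    (haH : ∀ θ, (1 - t) * a θ = 1 - t * H θ - M ^ 2 * t ^ 2) {x y : E n}
    (hx : x ∈ starBody a) (hy : y ∈ starBody k) : ‖(1 - t) • x + t • y‖ ≤ 1 := by
  have ht1 : 0 < 1 - t := by linarith
  obtain ⟨η, r, hr, hra, rfl⟩ := hx
  obtain ⟨θ, q, hq, hqk, rfl⟩ := hy
  have hη : ‖(η : E n)‖ = 1 := by simp
  have hθ : ‖(θ : E n)‖ = 1 := by simp
  have hqH : q * ⟪(η : E n), (θ : E n)⟫ ≤ H η := by
    rcases le_total 0 ⟪(η : E n), (θ : E n)⟫ with hc | hc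
    · nlinarith [hkH η θ]
    · nlinarith [hH0 η]
  have hq2 : q ^ 2 ≤ M ^ 2 := by nlinarith [hkM θ]
  have hM : 0 < M := (hk0 θ).trans_le (hkM θ)
  have hs : (1 - t) * r ≤ 1 - t * H η - M ^ 2 * t ^ 2 := by
    rw [← haH]; exact mul_le_mul_of_nonneg_left hra.le ht1.le
  have hs0 : 0 < (1 - t) * r := by positivity
  have hsq : ‖(1 - t) • r • (η : E n) + t • q • (θ : E n)‖ ^ 2 =
      ((1 - t) * r) ^ 2 + 2 * ((1 - t) * r) * t * (q * ⟪(η : E n), (θ : E n)⟫) + t ^ 2 * q ^ 2 := by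
    rw [norm_add_sq_real, smul_smul, smul_smul, norm_smul, norm_smul, hη, hθ, inner_smul_left,
      inner_smul_right]
    simp only [Real.norm_eq_abs, mul_one, sq_abs, conj_trivial]
    ring
  rw [← sq_le_one_iff₀ (norm_nonneg _), hsq]
  set s := (1 - t) * r
  have h1 : 2 * s * t * (q * ⟪(η : E n), (θ : E n)⟫) ≤ 2 * s * t * H η := by gcongr
  have h2 : t ^ 2 * q ^ 2 ≤ t ^ 2 * M ^ 2 := by gcongr
  have h3 : (s + t * H η) ^ 2 ≤ (1 - M ^ 2 * t ^ 2) ^ 2 := by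
    have := mul_nonneg ht.le (hH0 η)
    gcongr
    linarith
  have h4 : (t * M) ^ 2 ≤ 1 := by
    have : 0 ≤ t * M := by positivity
    nlinarith
  nlinarith [sq_nonneg (t * H η), sq_nonneg (t * M), mul_le_mul_of_nonneg_left h4 (sq_nonneg (t * M))]

/-- Urysohn-type inequality, for a star body of normalized volume one. -/
theorem one_le_integral_of_integral_pow_eq_one {n : ℕ} (hn : n ≠ 0)
    {k H : sphere (0 : E n) 1 → ℝ} (hk : Continuous k) (hH : Continuous H)
    (hk0 : ∀ θ, 0 < k θ) (hk1 : ∫ θ, k θ ^ n ∂unifSphere n = 1)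
    (hkH : ∀ η θ : sphere (0 : E n) 1, ⟪(η : E n), (θ : E n)⟫ * k θ ≤ H η) :
    1 ≤ ∫ θ, H θ ∂unifSphere n := by
  have := isProbabilityMeasure_unifSphere hn
  have hH0 (θ) : 0 ≤ H θ := by
    have hθ : ‖(θ : E n)‖ = 1 := by simp
    have := hkH θ θ
    rw [real_inner_self_eq_norm_sq, hθ] at this
    linarith [hk0 θ]
  obtain ⟨M, hM⟩ : ∃ M, 1 ≤ M ∧ ∀ θ, k θ ≤ M ∧ H θ ≤ M := by
    obtain ⟨M₁, h₁⟩ := (isCompact_range hk).bddAbove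
    obtain ⟨M₂, h₂⟩ := (isCompact_range hH).bddAbove
    refine ⟨max 1 (max M₁ M₂), le_max_left _ _, fun θ => ⟨?_, ?_⟩⟩
    · exact (h₁ ⟨θ, rfl⟩).trans ((le_max_left _ _).trans (le_max_right _ _))
    · exact (h₂ ⟨θ, rfl⟩).trans ((le_max_right _ _).trans (le_max_right _ _))
  obtain ⟨hM1, hM⟩ := hM
  have step (t : ℝ) (ht : 0 < t) (htM : t * M ≤ 1 / 4) :
      1 ≤ ∫ θ, H θ ∂unifSphere n + M ^ 2 * t := by
    have ht' : t < 1 := by nlinarith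
    have ht1 : 0 < 1 - t := by linarith
    set a : sphere (0 : E n) 1 → ℝ := fun θ => (1 - t * H θ - M ^ 2 * t ^ 2) / (1 - t) with ha
    have hac : Continuous a := by fun_prop
    have haH (θ) : (1 - t) * a θ = 1 - t * H θ - M ^ 2 * t ^ 2 := by
      simp only [ha]; field_simp
    have ha0 (θ) : 0 < a θ := by
      refine div_pos ?_ ht1
      have h1 : t * H θ ≤ t * M := mul_le_mul_of_nonneg_left (hM θ).2 ht.le
      have h2 : 0 ≤ t * M := by positivity
      nlinarith
    have hpow := integral_pow_le_one_of_combination_mem_closedBall hn ht ht' hac hk ha0 hk0 hk1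
      fun x hx y hy => norm_combination_le_one ht ht' hk0 (fun θ => (hM θ).1) hkH (by linarith)
        hH0 haH hx hy
    have hlin : ∫ θ, (1 + (n : ℝ) * (a θ - 1)) ∂unifSphere n ≤ ∫ θ, a θ ^ n ∂unifSphere n := by
      refine integral_mono (integrable_of_continuous_sphere hn (by fun_prop))
        (integrable_of_continuous_sphere hn (by fun_prop)) fun θ => ?_
      have := one_add_mul_le_pow (a := a θ - 1) (by linarith [ha0 θ]) n
      simpa using this
    have hia := integrable_of_continuous_sphere hn hac
    have hsum : ∫ θ, (1 + (n : ℝ) * (a θ - 1)) ∂unifSphere n =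
        1 + n * (∫ θ, a θ ∂unifSphere n - 1) := by
      rw [integral_add (integrable_const _)
        (integrable_of_continuous_sphere hn (by fun_prop)), integral_const_mul,
        integral_sub hia (integrable_const _)]
      simp
    rw [hsum] at hlin
    have ha1 : ∫ θ, a θ ∂unifSphere n ≤ 1 := by
      have hn' : (0 : ℝ) < n := by positivity
      nlinarith
    have hint : (1 - t) * ∫ θ, a θ ∂unifSphere n =
        1 - t * ∫ θ, H θ ∂unifSphere n - M ^ 2 * t ^ 2 := by
      have hiH := integrable_of_continuous_sphere hn hH
      rw [← integral_const_mul]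
      simp_rw [haH]
      rw [integral_sub (integrable_of_continuous_sphere hn (by fun_prop)) (integrable_const _),
        integral_sub (integrable_const _) (hiH.const_mul _), integral_const_mul]
      simp
    have : t * 1 ≤ t * (∫ θ, H θ ∂unifSphere n + M ^ 2 * t) := by nlinarith
    exact le_of_mul_le_mul_left this ht
  have hlim : Tendsto (fun t : ℝ => ∫ θ, H θ ∂unifSphere n + M ^ 2 * t) (nhdsWithin 0 (Set.Ioi 0))
      (nhds (∫ θ, H θ ∂unifSphere n)) := by
    have : Continuous fun t : ℝ => ∫ θ, H θ ∂unifSphere n + M ^ 2 * t := by fun_prop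
    simpa using (this.tendsto 0).mono_left nhdsWithin_le_nhds
  refine ge_of_tendsto hlim ?_
  have hpos : 0 < 1 / (4 * M) := by positivity
  filter_upwards [Ioo_mem_nhdsGT hpos] with t ht
  refine step t ht.1 ?_
  have := (lt_div_iff₀ (by positivity : (0 : ℝ) < 4 * M)).1 ht.2
  linarith

/-- Urysohn-type inequality: the volume radius of a star body is at most the mean of any
continuous majorant of its support function. -/
theorem integral_pow_le_pow_integral {n : ℕ} (hn : n ≠ 0)
    {k H : sphere (0 : E n) 1 → ℝ} (hk : Continuous k) (hH : Continuous H)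
    (hk0 : ∀ θ, 0 < k θ)
    (hkH : ∀ η θ : sphere (0 : E n) 1, ⟪(η : E n), (θ : E n)⟫ * k θ ≤ H η) :
    ∫ θ, k θ ^ n ∂unifSphere n ≤ (∫ θ, H θ ∂unifSphere n) ^ n := by
  have := isProbabilityMeasure_unifSphere hn
  set I := ∫ θ, k θ ^ n ∂unifSphere n with hI
  have hI0 : 0 < I := by
    rw [hI, integral_pos_iff_support_of_nonneg (fun θ => pow_nonneg (hk0 θ).le n)
      (integrable_of_continuous_sphere hn (by fun_prop))]
    have : (Function.support fun θ => k θ ^ n) = Set.univ := by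
      ext θ; simp [(hk0 θ).ne']
    rw [this]; simp
  set m := I ^ ((n : ℝ)⁻¹) with hm
  have hm0 : 0 < m := Real.rpow_pos_of_pos hI0 _
  have hmn : m ^ n = I := Real.rpow_inv_natCast_pow hI0.le hn
  have key := one_le_integral_of_integral_pow_eq_one hn (k := fun θ => k θ / m)
    (H := fun θ => H θ / m) (by fun_prop) (by fun_prop) (fun θ => div_pos (hk0 θ) hm0)
    (by simp_rw [div_pow]; rw [integral_div, hmn, div_self hI0.ne'])
    (fun η θ => by rw [← mul_div_assoc]; gcongr; exact hkH η θ)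
  rw [integral_div, le_div_iff₀ hm0, one_mul] at key
  rw [← hmn]
  gcongr

theorem cos_le_exp_neg_sq_div_two {x : ℝ} (hx : 0 ≤ x) (hx' : x < Real.pi / 2) :
    Real.cos x ≤ Real.exp (-(x ^ 2) / 2) := by
  have hd (y : ℝ) : HasDerivAt (fun y => Real.cos y * Real.exp (y ^ 2 / 2))
      (Real.exp (y ^ 2 / 2) * (y * Real.cos y - Real.sin y)) y := by
    have h1 : HasDerivAt (fun y : ℝ => y ^ 2 / 2) y y := by
      simpa using ((hasDerivAt_id y).pow 2).div_const 2
    exact ((Real.hasDerivAt_cos y).mul h1.exp).congr_deriv (by ring)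
  have hanti : AntitoneOn (fun y => Real.cos y * Real.exp (y ^ 2 / 2)) (Set.Ico 0 (Real.pi / 2)) := by
    refine antitoneOn_of_deriv_nonpos (convex_Ico _ _)
      (fun y _ => (hd y).continuousAt.continuousWithinAt)
      (fun y _ => (hd y).differentiableAt.differentiableWithinAt) fun y hy => ?_
    rw [interior_Ico] at hy
    rw [(hd y).deriv]
    have hcos : 0 < Real.cos y := Real.cos_pos_of_mem_Ioo ⟨by linarith [hy.1], hy.2⟩
    have htan := Real.le_tan hy.1.le hy.2
    rw [Real.tan_eq_sin_div_cos, le_div_iff₀ hcos] at htan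
    exact mul_nonpos_of_nonneg_of_nonpos (Real.exp_pos _).le (by linarith)
  have h := hanti ⟨le_rfl, by positivity⟩ ⟨hx, hx'⟩ hx
  simp only [Real.cos_zero, ne_eq, OfNat.ofNat_ne_zero, not_false_eq_true, zero_pow, zero_div,
    Real.exp_zero, mul_one] at h
  rw [neg_div, Real.exp_neg, ← one_div, le_div_iff₀ (Real.exp_pos _)]
  exact h

/-- One-sided second-order Taylor bound for a function with second derivative at most one. -/
theorem le_taylor_of_second_deriv_le_one {φ φ' φ'' : ℝ → ℝ} (h : ∀ s, HasDerivAt φ (φ' s) s)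
    (h' : ∀ s, HasDerivAt φ' (φ'' s) s) (hle : ∀ s, φ'' s ≤ 1) {s : ℝ} (hs : 0 ≤ s) :
    φ s ≤ φ 0 + s * φ' 0 + s ^ 2 / 2 := by
  have hd' (y : ℝ) : HasDerivAt (fun y => φ' y - y) (φ'' y - 1) y := (h' y).sub (hasDerivAt_id y)
  have hanti' : Antitone fun y => φ' y - y :=
    antitone_of_deriv_nonpos (fun y => (hd' y).differentiableAt) fun y => by
      rw [(hd' y).deriv]; linarith [hle y]
  have hd (y : ℝ) : HasDerivAt (fun y => φ y - y * φ' 0 - y ^ 2 / 2) (φ' y - φ' 0 - y) y := by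
    have h1 : HasDerivAt (fun y : ℝ => y ^ 2 / 2) y y := by
      simpa using ((hasDerivAt_id y).pow 2).div_const 2
    have h2 : HasDerivAt (fun y : ℝ => y * φ' 0) (φ' 0) y := hasDerivAt_mul_const _
    exact ((h y).sub h2).sub h1
  have hanti : AntitoneOn (fun y => φ y - y * φ' 0 - y ^ 2 / 2) (Set.Ici 0) := by
    refine antitoneOn_of_deriv_nonpos (convex_Ici _)
      (fun y _ => (hd y).continuousAt.continuousWithinAt)
      (fun y _ => (hd y).differentiableAt.differentiableWithinAt) fun y hy => ?_
    rw [interior_Ici] at hy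
    rw [(hd y).deriv]
    have := hanti' (Set.mem_Ioi.1 hy).le
    simp only [sub_zero] at this
    linarith
  have := hanti (Set.mem_Ici.2 le_rfl) (Set.mem_Ici.2 hs) hs
  simp only [zero_mul, sub_zero, ne_eq, OfNat.ofNat_ne_zero, not_false_eq_true, zero_pow,
    zero_div] at this
  linarith

/-- The second-order Taylor estimate along great circles satisfied by a function whose spherical
Hessian has norm at most one. -/
def SphericalTaylorBound {n : ℕ} (f : E n → ℝ) : Prop :=
  ∀ η τ : E n, ‖η‖ = 1 → ‖τ‖ = 1 → ⟪η, τ⟫ = 0 → ∀ s : ℝ, 0 ≤ s →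
    |f (Real.cos s • η + Real.sin s • τ) - f η - s * ⟪sgrad f η, τ⟫| ≤ s ^ 2 / 2

theorem inner_sgrad_of_inner_eq_zero {n : ℕ} (f : E n → ℝ) {η τ : E n} (h : ⟪η, τ⟫ = 0) :
    ⟪sgrad f η, τ⟫ = ⟪gradient f η, τ⟫ := by
  rw [sgrad, inner_sub_left, inner_smul_left, h, mul_zero, sub_zero]

theorem inner_sgrad_self {n : ℕ} (f : E n → ℝ) {η : E n} (hη : ‖η‖ = 1) :
    ⟪η, sgrad f η⟫ = 0 := by
  rw [sgrad, inner_sub_right, inner_smul_right, real_inner_self_eq_norm_sq, hη, real_inner_comm]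
  ring

theorem norm_cos_smul_add_sin_smul {n : ℕ} {η τ : E n} (hη : ‖η‖ = 1) (hτ : ‖τ‖ = 1)
    (h : ⟪η, τ⟫ = 0) (s : ℝ) : ‖Real.cos s • η + Real.sin s • τ‖ = 1 := by
  rw [← sq_eq_sq₀ (norm_nonneg _) zero_le_one, norm_add_sq_real, norm_smul, norm_smul, hη, hτ,
    inner_smul_left, inner_smul_right, h]
  simp only [Real.norm_eq_abs, mul_one, sq_abs, mul_zero, add_zero, one_pow]
  exact Real.cos_sq_add_sin_sq s

theorem inner_sHess_of_inner_eq_zero {n : ℕ} (f : E n → ℝ) {θ v : E n} (h : ⟪θ, v⟫ = 0) :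
    ⟪sHess f θ v, v⟫ = ⟪hess f θ v, v⟫ - ⟪gradient f θ, θ⟫ * ‖v‖ ^ 2 := by
  have hv : projPerp θ v = v := by simp [projPerp, h]
  have hw (w : E n) : ⟪projPerp θ w, v⟫ = ⟪w, v⟫ := by
    simp [projPerp, inner_sub_left, inner_smul_left, h]
  simp only [sHess, ContinuousLinearMap.comp_apply, hv, hw]
  simp [inner_sub_left, inner_smul_left]

theorem hasFDerivAt_gradient {n : ℕ} {f : E n → ℝ} {U : Set (E n)} (hU : IsOpen U)
    (hf : ContDiffOn ℝ 2 f U) {x : E n} (hx : x ∈ U) :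
    HasFDerivAt (gradient f) (hess f x) x := by
  have h1 : DifferentiableAt ℝ (fderiv ℝ f) x :=
    ((hf.fderiv_of_isOpen (m := 1) hU (by norm_num)).contDiffAt (hU.mem_nhds hx)).differentiableAt
      (by norm_num)
  exact ((InnerProductSpace.toDual ℝ (E n)).symm.toContinuousLinearEquiv.differentiableAt.comp x
    h1).hasFDerivAt

theorem sphericalTaylorBound_of_norm_sHess_le {n : ℕ} {f : E n → ℝ} {U : Set (E n)}
    (hU : IsOpen U) (hUS : sphere (0 : E n) 1 ⊆ U) (hf : ContDiffOn ℝ 2 f U)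
    (hop : ∀ θ ∈ sphere (0 : E n) 1, ‖sHess f θ‖ ≤ 1) : SphericalTaylorBound f := by
  intro η τ hη hτ hητ s hs
  set γ : ℝ → E n := fun s => Real.cos s • η + Real.sin s • τ with hγ
  set γ' : ℝ → E n := fun s => (-Real.sin s) • η + Real.cos s • τ with hγ'
  have dγ (s : ℝ) : HasDerivAt γ (γ' s) s :=
    ((Real.hasDerivAt_cos s).smul_const η).add ((Real.hasDerivAt_sin s).smul_const τ)
  have dγ' (s : ℝ) : HasDerivAt γ' (-γ s) s := by
    refine (((Real.hasDerivAt_sin s).neg.smul_const η).add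
      ((Real.hasDerivAt_cos s).smul_const τ)).congr_deriv ?_
    simp only [hγ, neg_add, neg_smul]
  have nγ (s : ℝ) : ‖γ s‖ = 1 := norm_cos_smul_add_sin_smul hη hτ hητ s
  have mγ (s : ℝ) : γ s ∈ sphere (0 : E n) 1 := by simp [nγ s]
  have eγ' (s : ℝ) : γ' s = Real.cos (s + Real.pi / 2) • η + Real.sin (s + Real.pi / 2) • τ := by
    rw [Real.cos_add_pi_div_two, Real.sin_add_pi_div_two]
  have nγ' (s : ℝ) : ‖γ' s‖ = 1 := by
    rw [eγ']; exact norm_cos_smul_add_sin_smul hη hτ hητ _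
  have hperp (s : ℝ) : ⟪γ s, γ' s⟫ = 0 := by
    simp only [hγ, hγ', inner_add_left, inner_add_right, inner_smul_left, inner_smul_right,
      real_inner_self_eq_norm_sq, hη, hτ, hητ, real_inner_comm η τ, conj_trivial]
    ring
  have hφ (s : ℝ) : HasDerivAt (fun s => f (γ s)) ⟪gradient f (γ s), γ' s⟫ s := by
    have hd : DifferentiableAt ℝ f (γ s) :=
      (hf.contDiffAt (hU.mem_nhds (hUS (mγ s)))).differentiableAt (by norm_num)
    have := hd.hasFDerivAt.comp_hasDerivAt s (dγ s)
    rwa [← inner_gradient_left] at this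
  have hφ' (s : ℝ) : HasDerivAt (fun s => ⟪gradient f (γ s), γ' s⟫)
      ⟪sHess f (γ s) (γ' s), γ' s⟫ s := by
    have h1 := (hasFDerivAt_gradient hU hf (hUS (mγ s))).comp_hasDerivAt s (dγ s)
    refine (h1.inner ℝ (dγ' s)).congr_deriv ?_
    rw [inner_sHess_of_inner_eq_zero f (hperp s), nγ', inner_neg_right]
    simp only [Function.comp]
    ring
  have hφ'' (s : ℝ) : |⟪sHess f (γ s) (γ' s), γ' s⟫| ≤ 1 := by
    refine (abs_real_inner_le_norm _ _).trans ?_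
    rw [nγ', mul_one]
    refine ((sHess f (γ s)).le_opNorm _).trans ?_
    rw [nγ', mul_one]
    exact hop _ (mγ s)
  have γ0 : γ 0 = η := by simp [hγ]
  have γ'0 : γ' 0 = τ := by simp [hγ']
  have up := le_taylor_of_second_deriv_le_one hφ hφ' (fun s => (abs_le.1 (hφ'' s)).2) hs
  have lo := le_taylor_of_second_deriv_le_one (fun s => (hφ s).neg) (fun s => (hφ' s).neg)
    (fun s => by linarith [(abs_le.1 (hφ'' s)).1]) hs
  simp only [Pi.neg_apply, γ0, γ'0] at up lo
  rw [inner_sgrad_of_inner_eq_zero f hητ, abs_le]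
  constructor <;> linarith

theorem exists_unit_inner_eq_zero {n : ℕ} (hn : 2 ≤ n) (η : E n) :
    ∃ τ : E n, ‖τ‖ = 1 ∧ ⟪η, τ⟫ = 0 := by
  obtain ⟨v, hv, hv0⟩ := Submodule.exists_mem_ne_zero_of_ne_bot (p := (ℝ ∙ η)ᗮ) fun h => by
    rw [Submodule.orthogonal_eq_bot_iff] at h
    have := finrank_span_le_card (R := ℝ) ({η} : Set (E n))
    rw [h, finrank_top, finrank_euclideanSpace_fin, Set.toFinset_singleton, Finset.card_singleton] at this
    omega
  refine ⟨‖v‖⁻¹ • v, by simp [norm_smul, hv0], ?_⟩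
  rw [inner_smul_right, Submodule.mem_orthogonal_singleton_iff_inner_right.1 hv, mul_zero]

/-- Every unit vector lies on a great circle through a given point of the sphere. -/
theorem exists_eq_cos_smul_add_sin_smul {n : ℕ} (hn : 2 ≤ n) {η θ : E n} (hη : ‖η‖ = 1)
    (hθ : ‖θ‖ = 1) : ∃ τ : E n, ‖τ‖ = 1 ∧ ⟪η, τ⟫ = 0 ∧
      θ = Real.cos (Real.arccos ⟪η, θ⟫) • η + Real.sin (Real.arccos ⟪η, θ⟫) • τ := by
  have hc := abs_le.1 (abs_real_inner_le_norm η θ)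
  rw [hη, hθ, mul_one] at hc
  rw [Real.cos_arccos hc.1 hc.2, Real.sin_arccos]
  set c := ⟪η, θ⟫
  have hv : ‖θ - c • η‖ = √(1 - c ^ 2) := by
    rw [← Real.sqrt_sq (norm_nonneg _), norm_sub_sq_real, inner_smul_right, norm_smul, hη, hθ,
      real_inner_comm]
    simp only [Real.norm_eq_abs, mul_one, sq_abs]
    congr 1; ring
  rcases eq_or_ne (θ - c • η) 0 with h0 | h0
  · obtain ⟨τ, hτ, hητ⟩ := exists_unit_inner_eq_zero hn η
    refine ⟨τ, hτ, hητ, ?_⟩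
    rw [← hv, h0, norm_zero, zero_smul, add_zero]
    exact sub_eq_zero.1 h0
  · refine ⟨‖θ - c • η‖⁻¹ • (θ - c • η), by simp [norm_smul, h0], ?_, ?_⟩
    · rw [inner_smul_right, inner_sub_right, inner_smul_right, real_inner_self_eq_norm_sq, hη]
      simp [c]
    · rw [← hv, smul_smul, mul_inv_cancel₀ (norm_ne_zero_iff.2 h0), one_smul]
      abel

theorem measurePreserving_neg_toSphere (n : ℕ) :
    MeasurePreserving (fun θ : sphere (0 : E n) 1 => -θ) (volume : Measure (E n)).toSphere
      (volume : Measure (E n)).toSphere := by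
  refine ⟨continuous_neg.measurable, Measure.ext fun s hs => ?_⟩
  rw [Measure.map_apply continuous_neg.measurable hs,
    Measure.toSphere_apply' _ (continuous_neg.measurable hs), Measure.toSphere_apply' _ hs]
  congr 1
  rw [← Measure.measure_preimage_neg]
  congr 1
  ext x
  simp only [Set.mem_smul, Set.mem_preimage, Set.mem_image]
  constructor
  · rintro ⟨r, hr, _, ⟨θ, hθ, rfl⟩, h⟩
    exact ⟨r, hr, _, ⟨-θ, hθ, rfl⟩, by rw [coe_neg_sphere, smul_neg, h, neg_neg]⟩
  · rintro ⟨r, hr, _, ⟨θ, hθ, rfl⟩, h⟩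
    exact ⟨r, hr, _, ⟨-θ, by simpa using hθ, rfl⟩, by rw [coe_neg_sphere, smul_neg, h]⟩

theorem integral_comp_neg_unifSphere {n : ℕ} (g : sphere (0 : E n) 1 → ℝ) :
    ∫ θ, g (-θ) ∂unifSphere n = ∫ θ, g θ ∂unifSphere n := by
  rw [unifSphere, integral_smul_measure, integral_smul_measure,
    (measurePreserving_neg_toSphere n).integral_comp (Homeomorph.neg _).measurableEmbedding]

theorem SphericalTaylorBound.norm_sgrad_le {n : ℕ} {f : E n → ℝ} (hf : SphericalTaylorBound f)
    {η : E n} (hη : ‖η‖ = 1) : ‖sgrad f η‖ ≤ Real.pi / 2 := by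
  rcases eq_or_ne (sgrad f η) 0 with h0 | h0
  · rw [h0, norm_zero]; positivity
  have hp : 0 < ‖sgrad f η‖ := norm_pos_iff.2 h0
  set τ := ‖sgrad f η‖⁻¹ • sgrad f η with hτ
  have nτ : ‖τ‖ = 1 := by simp [hτ, norm_smul, h0]
  have hητ : ⟪η, τ⟫ = 0 := by rw [hτ, inner_smul_right, inner_sgrad_self f hη, mul_zero]
  have hin : ⟪sgrad f η, τ⟫ = ‖sgrad f η‖ := by
    rw [hτ, inner_smul_right, real_inner_self_eq_norm_sq]; field_simp
  have h1 := abs_le.1 (hf η τ hη nτ hητ Real.pi Real.pi_pos.le)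
  have h2 := abs_le.1 (hf η (-τ) hη (by rwa [norm_neg]) (by rw [inner_neg_right, hητ, neg_zero])
    Real.pi Real.pi_pos.le)
  simp only [inner_neg_right, hin, Real.cos_pi, Real.sin_pi, zero_smul, add_zero] at h1 h2
  have : Real.pi * ‖sgrad f η‖ ≤ Real.pi * (Real.pi / 2) := by linarith [h1.1, h2.2]
  exact le_of_mul_le_mul_left this Real.pi_pos

theorem SphericalTaylorBound.inner_sgrad_eq_zero_of_forall_le {n : ℕ} {f : E n → ℝ}
    (hf : SphericalTaylorBound f) {η τ : E n} (hη : ‖η‖ = 1) (hτ : ‖τ‖ = 1) (hητ : ⟪η, τ⟫ = 0)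
    (hmax : ∀ θ : E n, ‖θ‖ = 1 → f θ ≤ f η) : ⟪sgrad f η, τ⟫ = 0 := by
  have key {τ : E n} (hτ : ‖τ‖ = 1) (hητ : ⟪η, τ⟫ = 0) : ⟪sgrad f η, τ⟫ ≤ 0 := by
    by_contra! hpos
    set p := ⟪sgrad f η, τ⟫
    have h1 := (abs_le.1 (hf η τ hη hτ hητ p hpos.le)).1
    have h2 := hmax _ (norm_cos_smul_add_sin_smul hη hτ hητ p)
    nlinarith
  refine le_antisymm (key hτ hητ) ?_
  have := key (τ := -τ) (by rwa [norm_neg]) (by rw [inner_neg_right, hητ, neg_zero])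
  rw [inner_neg_right] at this
  linarith

/-- The sum of the values at two antipodal points is almost twice the maximum. -/
theorem SphericalTaylorBound.two_mul_max_le_add {n : ℕ} (hn : 2 ≤ n) {f : E n → ℝ}
    (hf : SphericalTaylorBound f) {η θ : E n} (hη : ‖η‖ = 1) (hθ : ‖θ‖ = 1)
    (hmax : ∀ θ : E n, ‖θ‖ = 1 → f θ ≤ f η) :
    2 * f η - Real.pi ^ 2 / 2 ≤ f θ + f (-θ) := by
  obtain ⟨τ, hτ, hητ, h⟩ := exists_eq_cos_smul_add_sin_smul hn hη hθ
  set α := Real.arccos ⟪η, θ⟫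
  have hα0 : 0 ≤ α := Real.arccos_nonneg _
  have hα1 : α ≤ Real.pi := Real.arccos_le_pi _
  have hneg : -θ = Real.cos (Real.pi - α) • η + Real.sin (Real.pi - α) • (-τ) := by
    rw [Real.cos_pi_sub, Real.sin_pi_sub, h, smul_neg, neg_smul, neg_add]
  have h1 := (abs_le.1 (hf η τ hη hτ hητ α hα0)).1
  have h2 := (abs_le.1 (hf η (-τ) hη (by rwa [norm_neg])
    (by rw [inner_neg_right, hητ, neg_zero]) (Real.pi - α) (by linarith))).1
  rw [← h, hf.inner_sgrad_eq_zero_of_forall_le hη hτ hητ hmax] at h1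
  rw [← hneg, inner_neg_right, hf.inner_sgrad_eq_zero_of_forall_le hη hτ hητ hmax] at h2
  nlinarith

theorem SphericalTaylorBound.le_of_integral_eq_zero {n : ℕ} (hn : 2 ≤ n) {f : E n → ℝ}
    (hf : SphericalTaylorBound f) (hc : Continuous fun θ : sphere (0 : E n) 1 => f θ)
    (hmean : ∫ θ : sphere (0 : E n) 1, f θ ∂unifSphere n = 0) (θ : sphere (0 : E n) 1) :
    f θ ≤ Real.pi ^ 2 / 4 := by
  have hn0 : n ≠ 0 := by omega
  have := isProbabilityMeasure_unifSphere hn0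
  obtain ⟨η, -, hη⟩ := isCompact_univ.exists_isMaxOn ⟨θ, Set.mem_univ _⟩ hc.continuousOn
  have hmax (ξ : E n) (hξ : ‖ξ‖ = 1) : f ξ ≤ f η :=
    hη (Set.mem_univ (⟨ξ, by simpa using hξ⟩ : sphere (0 : E n) 1))
  have hi := integrable_of_continuous_sphere hn0 hc
  have hi' : Integrable (fun ξ : sphere (0 : E n) 1 => f (-(ξ : E n))) (unifSphere n) :=
    integrable_of_continuous_sphere hn0 (hc.comp continuous_neg)
  have hle : ∫ _ : sphere (0 : E n) 1, (2 * f η - Real.pi ^ 2 / 2) ∂unifSphere n ≤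
      ∫ ξ : sphere (0 : E n) 1, (f ξ + f (-ξ)) ∂unifSphere n :=
    integral_mono (integrable_const _) (hi.add hi') fun ξ =>
      hf.two_mul_max_le_add hn (by simp) (by simp) hmax
  have hneg := integral_comp_neg_unifSphere fun ξ : sphere (0 : E n) 1 => f ξ
  simp only [coe_neg_sphere] at hneg
  rw [integral_add hi hi', hneg, hmean, integral_const, probReal_univ, one_smul] at hle
  linarith [hmax θ (by simp)]

/-- The support function of the star body with radial function `exp (s f)`. -/
theorem SphericalTaylorBound.inner_mul_exp_le {n : ℕ} (hn : 2 ≤ n) {f : E n → ℝ}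
    (hf : SphericalTaylorBound f) {s : ℝ} (hs : 0 ≤ s) (hs' : s < 1) {η θ : E n} (hη : ‖η‖ = 1)
    (hθ : ‖θ‖ = 1) : ⟪η, θ⟫ * Real.exp (s * f θ) ≤
      Real.exp (s * f η + s ^ 2 / (2 * (1 - s)) * ‖sgrad f η‖ ^ 2) := by
  rcases le_or_gt ⟪η, θ⟫ 0 with hc | hc
  · exact (mul_nonpos_of_nonpos_of_nonneg hc (Real.exp_pos _).le).trans (Real.exp_pos _).le
  have hc1 := abs_le.1 (abs_real_inner_le_norm η θ)
  rw [hη, hθ, mul_one] at hc1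
  obtain ⟨τ, hτ, hητ, h⟩ := exists_eq_cos_smul_add_sin_smul hn hη hθ
  have hcos := Real.cos_arccos hc1.1 hc1.2
  have hα0 : 0 ≤ Real.arccos ⟪η, θ⟫ := Real.arccos_nonneg _
  have hα1 : Real.arccos ⟪η, θ⟫ < Real.pi / 2 := Real.arccos_lt_pi_div_two.2 hc
  set α := Real.arccos ⟪η, θ⟫
  have h1 := (abs_le.1 (hf η τ hη hτ hητ α hα0)).2
  rw [← h] at h1
  have h2 : ⟪sgrad f η, τ⟫ ≤ ‖sgrad f η‖ := by
    simpa [hτ] using real_inner_le_norm (sgrad f η) τ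
  set p := ‖sgrad f η‖
  have h3 : f θ ≤ f η + α * p + α ^ 2 / 2 := by
    have := mul_le_mul_of_nonneg_left h2 hα0
    linarith
  have hs1 : 0 < 1 - s := by linarith
  have h4 : s * α * p - (1 - s) * α ^ 2 / 2 ≤ s ^ 2 / (2 * (1 - s)) * p ^ 2 := by
    have : s ^ 2 / (2 * (1 - s)) * p ^ 2 - (s * α * p - (1 - s) * α ^ 2 / 2) =
        (s * p - (1 - s) * α) ^ 2 / (2 * (1 - s)) := by
      field_simp
      ring
    have : 0 ≤ (s * p - (1 - s) * α) ^ 2 / (2 * (1 - s)) := by positivity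
    linarith
  calc ⟪η, θ⟫ * Real.exp (s * f θ) ≤ Real.exp (-(α ^ 2) / 2) * Real.exp (s * f θ) := by
        gcongr
        rw [← hcos]
        exact cos_le_exp_neg_sq_div_two hα0 hα1
    _ = Real.exp (-(α ^ 2) / 2 + s * f θ) := (Real.exp_add _ _).symm
    _ ≤ _ := by
        rw [Real.exp_le_exp]
        have := mul_le_mul_of_nonneg_left h3 hs
        nlinarith

theorem continuous_restrict_sphere {n : ℕ} {f : E n → ℝ} {U : Set (E n)}
    (hUS : sphere (0 : E n) 1 ⊆ U) (hf : ContDiffOn ℝ 2 f U) :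
    Continuous fun θ : sphere (0 : E n) 1 => f θ :=
  (hf.continuousOn.mono hUS).domRestrict

theorem continuous_sgrad_restrict_sphere {n : ℕ} {f : E n → ℝ} {U : Set (E n)} (hU : IsOpen U)
    (hUS : sphere (0 : E n) 1 ⊆ U) (hf : ContDiffOn ℝ 2 f U) :
    Continuous fun θ : sphere (0 : E n) 1 => sgrad f θ := by
  have hgrad : Continuous fun θ : sphere (0 : E n) 1 => gradient f θ := by
    have : ContinuousOn (gradient f) U := fun x hx =>
      (hasFDerivAt_gradient hU hf hx).continuousAt.continuousWithinAt
    exact (this.mono hUS).domRestrict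
  unfold sgrad
  fun_prop

/-- The Urysohn-type inequality for the star body with radial function `exp (s f)`. -/
theorem SphericalTaylorBound.integral_exp_pow_le {n : ℕ} (hn : 2 ≤ n) {f : E n → ℝ}
    (hf : SphericalTaylorBound f) (hc : Continuous fun θ : sphere (0 : E n) 1 => f θ)
    (hg : Continuous fun θ : sphere (0 : E n) 1 => sgrad f θ) {s : ℝ} (hs : 0 ≤ s) (hs' : s < 1) :
    ∫ θ : sphere (0 : E n) 1, Real.exp (n * s * f θ) ∂unifSphere n ≤
      (∫ θ : sphere (0 : E n) 1,
        Real.exp (s * f θ + s ^ 2 / (2 * (1 - s)) * ‖sgrad f θ‖ ^ 2) ∂unifSphere n) ^ n := by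
  have := integral_pow_le_pow_integral (n := n) (by omega)
    (k := fun θ => Real.exp (s * f θ))
    (H := fun θ => Real.exp (s * f θ + s ^ 2 / (2 * (1 - s)) * ‖sgrad f θ‖ ^ 2))
    (hc.const_mul s).rexp
    ((hc.const_mul s).add ((hg.norm.pow 2).const_mul _)).rexp (fun θ => Real.exp_pos _)
    (fun η θ => hf.inner_mul_exp_le hn hs hs' (by simp) (by simp))
  simpa only [← Real.exp_nat_mul, ← mul_assoc] using this

theorem exp_le_one_add_add_mul_sq {x : ℝ} (hx : x ≤ 1.86) : Real.exp x ≤ 1 + x + 1.05 * x ^ 2 := by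
  rcases le_total x 0 with h0 | h0
  · have h := Real.quadratic_le_exp_of_nonneg (neg_nonneg.2 h0)
    have h1 : Real.exp x * Real.exp (-x) = 1 := by rw [← Real.exp_add]; simp
    have h2 : 1 ≤ (1 + x + 1.05 * x ^ 2) * (1 + -x + (-x) ^ 2 / 2) := by
      have h3 : 0 ≤ (-x) ^ 3 := pow_nonneg (neg_nonneg.2 h0) 3
      nlinarith [sq_nonneg x, sq_nonneg (x ^ 2)]
    have h3 : 0 < 1 + x + 1.05 * x ^ 2 := by nlinarith [sq_nonneg (x + 1 / 2)]
    have h4 : 1 ≤ (1 + x + 1.05 * x ^ 2) * Real.exp (-x) :=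
      h2.trans (mul_le_mul_of_nonneg_left h h3.le)
    exact le_of_mul_le_mul_right (by rwa [h1]) (Real.exp_pos (-x))
  · obtain ⟨y, rfl⟩ : ∃ y, x = 2 * y := ⟨x / 2, by ring⟩
    have hy0 : 0 ≤ y := by linarith
    have hy1 : y ≤ 0.93 := by linarith
    have h := Real.exp_bound' hy0 (by linarith) (n := 4) (by norm_num)
    norm_num [Finset.sum_range_succ, Nat.factorial] at h
    have h1 : Real.exp y ≤ 1 + y + 0.7001 * y ^ 2 := by
      have hy2 := sq_nonneg y
      have h3 : y ^ 3 ≤ 0.93 * y ^ 2 := by nlinarith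
      have h4 : y ^ 4 ≤ 0.93 ^ 2 * y ^ 2 := by nlinarith
      linarith
    have h2 : Real.exp (2 * y) = Real.exp y ^ 2 := by
      rw [← Real.exp_nat_mul]; norm_num
    rw [h2]
    calc Real.exp y ^ 2 ≤ (1 + y + 0.7001 * y ^ 2) ^ 2 := by gcongr
      _ ≤ _ := by
        have hy2 := sq_nonneg y
        have h3 : y ^ 3 ≤ 0.93 * y ^ 2 := by nlinarith
        have h4 : y ^ 4 ≤ 0.93 ^ 2 * y ^ 2 := by nlinarith
        nlinarith

theorem abs_exp_sub_quadratic_le {x : ℝ} (hx : |x| ≤ 1) :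
    |Real.exp x - (1 + x + x ^ 2 / 2)| ≤ |x| ^ 3 := by
  have h := Real.exp_bound hx (n := 3) (by norm_num)
  norm_num [Finset.sum_range_succ, Nat.factorial] at h
  have : 0 ≤ |x| ^ 3 := by positivity
  linarith

theorem pi_sq_div_four_le : Real.pi ^ 2 / 4 ≤ 2.4675 := by
  nlinarith [Real.pi_lt_d4, Real.pi_pos]

theorem integral_quadratic_combination {n : ℕ} (hn : n ≠ 0) {f g : sphere (0 : E n) 1 → ℝ}
    (hf : Continuous f) (hg : Continuous g) (c₀ c₁ c₂ c₃ : ℝ) :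
    ∫ θ, (c₀ + c₁ * f θ + c₂ * f θ ^ 2 + c₃ * g θ) ∂unifSphere n =
      c₀ + c₁ * ∫ θ, f θ ∂unifSphere n + c₂ * ∫ θ, f θ ^ 2 ∂unifSphere n +
        c₃ * ∫ θ, g θ ∂unifSphere n := by
  have := isProbabilityMeasure_unifSphere hn
  rw [integral_add (integrable_of_continuous_sphere hn (by fun_prop))
      (integrable_of_continuous_sphere hn (by fun_prop)),
    integral_add (integrable_of_continuous_sphere hn (by fun_prop))
      (integrable_of_continuous_sphere hn (by fun_prop)),
    integral_add (integrable_of_continuous_sphere hn (by fun_prop))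
      (integrable_of_continuous_sphere hn (by fun_prop)),
    integral_const_mul, integral_const_mul, integral_const_mul]
  simp

/-- Poincaré inequality obtained by linearizing an Urysohn-type inequality. -/
theorem poincare_of_integral_exp_pow_le {n : ℕ} (hn : n ≠ 0) {f g : sphere (0 : E n) 1 → ℝ}
    (hf : Continuous f) (hg : Continuous g) (hg0 : ∀ θ, 0 ≤ g θ)
    (hmean : ∫ θ, f θ ∂unifSphere n = 0)
    (h : ∀ s : ℝ, 0 ≤ s → s < 1 → ∫ θ, Real.exp (n * s * f θ) ∂unifSphere n ≤
      (∫ θ, Real.exp (s * f θ + s ^ 2 / (2 * (1 - s)) * g θ) ∂unifSphere n) ^ n) :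
    ((n : ℝ) - 1) * ∫ θ, f θ ^ 2 ∂unifSphere n ≤ ∫ θ, g θ ∂unifSphere n := by
  have := isProbabilityMeasure_unifSphere hn
  have hnpos : (0 : ℝ) < n := by positivity
  obtain ⟨K, hK1, hKf, hKg⟩ : ∃ K : ℝ, 1 ≤ K ∧ (∀ θ, |f θ| ≤ K) ∧ ∀ θ, g θ ≤ K := by
    obtain ⟨M₁, h₁⟩ := (isCompact_range hf.abs).bddAbove
    obtain ⟨M₂, h₂⟩ := (isCompact_range hg).bddAbove
    refine ⟨max 1 (max M₁ M₂), le_max_left _ _, fun θ => ?_, fun θ => ?_⟩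
    · exact (h₁ ⟨θ, rfl⟩).trans ((le_max_left _ _).trans (le_max_right _ _))
    · exact (h₂ ⟨θ, rfl⟩).trans ((le_max_right _ _).trans (le_max_right _ _))
  have hK0 : 0 < K := by linarith
  set V := ∫ θ, f θ ^ 2 ∂unifSphere n with hV
  set G := ∫ θ, g θ ∂unifSphere n with hG
  have hV0 : 0 ≤ V := integral_nonneg fun θ => sq_nonneg _
  have hG0 : 0 ≤ G := integral_nonneg hg0
  set D : ℝ → ℝ := fun s => V / 2 + G / 2 + s * (K + 3 / 2 * K ^ 2 + 8 * K ^ 3) with hD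
  have hDc : Continuous D := by fun_prop
  have lower (s : ℝ) (hs : 0 < s) (hsn : n * s * K ≤ 1) :
      1 + n ^ 2 * s ^ 2 * V / 2 - n ^ 3 * s ^ 3 * K ^ 3 ≤
        ∫ θ, Real.exp (n * s * f θ) ∂unifSphere n := by
    have hint := integral_quadratic_combination hn hf hg (1 - n ^ 3 * s ^ 3 * K ^ 3) (n * s)
      (n ^ 2 * s ^ 2 / 2) 0
    rw [hmean, ← hV] at hint
    have hmono := integral_mono (μ := unifSphere n)
      (f := fun θ => (1 - n ^ 3 * s ^ 3 * K ^ 3) + n * s * f θ + n ^ 2 * s ^ 2 / 2 * f θ ^ 2 +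
        0 * g θ) (g := fun θ => Real.exp (n * s * f θ))
      (integrable_of_continuous_sphere hn (by fun_prop))
      (integrable_of_continuous_sphere hn (by fun_prop)) fun θ => by
        have hb : |n * s * f θ| ≤ n * s * K := by
          rw [abs_mul, abs_of_pos (by positivity : (0 : ℝ) < n * s)]
          gcongr
          exact hKf θ
        have h1 := (abs_le.1 (abs_exp_sub_quadratic_le (hb.trans hsn))).1
        have h2 : |n * s * f θ| ^ 3 ≤ (n * s * K) ^ 3 := by gcongr
        simp only
        nlinarith
    linarith
  have upper (s : ℝ) (hs : 0 < s) (hs1 : s ≤ 1 / 2) (hsK : 2 * s * K ≤ 1) :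
      ∫ θ, Real.exp (s * f θ + s ^ 2 / (2 * (1 - s)) * g θ) ∂unifSphere n ≤
        1 + s ^ 2 * D s := by
    set b := s ^ 2 / (2 * (1 - s)) with hb
    have hs1' : 0 < 1 - s := by linarith
    have hb0 : 0 ≤ b := by positivity
    have hb1 : b ≤ s ^ 2 / 2 + s ^ 3 := by
      rw [hb, div_le_iff₀ (by positivity)]
      nlinarith [pow_pos hs 3, pow_pos hs 2]
    have hb2 : b ≤ s ^ 2 := by nlinarith [pow_pos hs 2]
    have hint := integral_quadratic_combination hn hf hg
      (1 + s ^ 3 * (K + 3 / 2 * K ^ 2 + 8 * K ^ 3)) s (s ^ 2 / 2) (s ^ 2 / 2)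
    rw [hmean, ← hV, ← hG] at hint
    have hmono := integral_mono (μ := unifSphere n)
      (f := fun θ => Real.exp (s * f θ + b * g θ))
      (g := fun θ => (1 + s ^ 3 * (K + 3 / 2 * K ^ 2 + 8 * K ^ 3)) + s * f θ +
        s ^ 2 / 2 * f θ ^ 2 + s ^ 2 / 2 * g θ)
      (integrable_of_continuous_sphere hn (by fun_prop))
      (integrable_of_continuous_sphere hn (by fun_prop)) fun θ => by
        have hfθ := hKf θ
        have hgθ := hKg θ
        have hgθ0 := hg0 θ
        have e1 : |s * f θ| ≤ s * K := by
          rw [abs_mul, abs_of_pos hs]; gcongr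
        have e2 : 0 ≤ b * g θ := by positivity
        have e3 : b * g θ ≤ s ^ 2 * K := by gcongr
        have e4 : s ^ 2 * K ≤ s * K := by
          gcongr
          nlinarith
        have hY : |s * f θ + b * g θ| ≤ 2 * s * K := by
          refine (abs_add_le _ _).trans ?_
          rw [abs_of_nonneg e2]
          linarith
        have h1 := (abs_le.1 (abs_exp_sub_quadratic_le (hY.trans hsK))).2
        have h2 : |s * f θ + b * g θ| ^ 3 ≤ (2 * s * K) ^ 3 := by gcongr
        have h3 : (s * f θ) * (b * g θ) ≤ s ^ 3 * K ^ 2 := by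
          calc (s * f θ) * (b * g θ) ≤ (s * K) * (s ^ 2 * K) :=
                mul_le_mul ((le_abs_self _).trans e1) e3 e2 (by positivity)
            _ = _ := by ring
        have h4 : (b * g θ) ^ 2 ≤ s ^ 3 * K ^ 2 := by
          calc (b * g θ) ^ 2 = (b * g θ) * (b * g θ) := sq _
            _ ≤ (s * K) * (s ^ 2 * K) := mul_le_mul (e3.trans e4) e3 e2 (by positivity)
            _ = _ := by ring
        have h5 : b * g θ ≤ s ^ 2 / 2 * g θ + s ^ 3 * K := by
          calc b * g θ ≤ (s ^ 2 / 2 + s ^ 3) * g θ := by gcongr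
            _ = s ^ 2 / 2 * g θ + s ^ 3 * g θ := by ring
            _ ≤ _ := by gcongr
        simp only
        nlinarith
    refine hmono.trans (le_of_eq ?_)
    rw [hint, hD]
    ring
  have main : ∀ᶠ s in nhdsWithin (0 : ℝ) (Set.Ioi 0),
      n ^ 2 * V / 2 - n ^ 3 * K ^ 3 * s ≤ n * D s + n ^ 2 * s ^ 2 * D s ^ 2 := by
    have small (w : ℝ → ℝ) (hw : Continuous w) (hw0 : w 0 < 1) :
        ∀ᶠ s in nhdsWithin (0 : ℝ) (Set.Ioi 0), w s < 1 :=
      ((hw.tendsto 0).eventually (gt_mem_nhds hw0)).filter_mono nhdsWithin_le_nhds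
    filter_upwards [self_mem_nhdsWithin, small (fun s => 2 * s) (by fun_prop) (by simp),
      small (fun s => 2 * s * K) (by fun_prop) (by simp),
      small (fun s => n * s * K) (by fun_prop) (by simp),
      small (fun s => n * (s ^ 2 * D s)) (by fun_prop) (by simp)] with s hs h1 h2 h3 h4
    have hs0 : 0 < s := hs
    have hDs : 0 ≤ D s := by simp only [hD]; positivity
    have hδ : 0 ≤ n * (s ^ 2 * D s) := by positivity
    have hexp : Real.exp (n * (s ^ 2 * D s)) ≤
        1 + n * (s ^ 2 * D s) + (n * (s ^ 2 * D s)) ^ 2 := by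
      have := (abs_le.1 (Real.abs_exp_sub_one_sub_id_le (by rw [abs_of_nonneg hδ]; exact h4.le))).2
      linarith
    have hchain := calc
      1 + n ^ 2 * s ^ 2 * V / 2 - n ^ 3 * s ^ 3 * K ^ 3
          ≤ ∫ θ, Real.exp (n * s * f θ) ∂unifSphere n := lower s hs0 h3.le
      _ ≤ _ := h s hs0.le (by linarith)
      _ ≤ (1 + s ^ 2 * D s) ^ n :=
        pow_le_pow_left₀ (integral_nonneg fun θ => (Real.exp_pos _).le)
          (upper s hs0 (by linarith) h2.le) n
      _ ≤ Real.exp (s ^ 2 * D s) ^ n := by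
        gcongr
        linarith [Real.add_one_le_exp (s ^ 2 * D s)]
      _ = Real.exp (n * (s ^ 2 * D s)) := (Real.exp_nat_mul _ _).symm
      _ ≤ _ := hexp
    have : s ^ 2 * (n ^ 2 * V / 2 - n ^ 3 * K ^ 3 * s) ≤
        s ^ 2 * (n * D s + n ^ 2 * s ^ 2 * D s ^ 2) := by linarith
    exact le_of_mul_le_mul_left this (by positivity)
  have lim1 : Tendsto (fun s : ℝ => n ^ 2 * V / 2 - n ^ 3 * K ^ 3 * s)
      (nhdsWithin 0 (Set.Ioi 0)) (nhds (n ^ 2 * V / 2 - n ^ 3 * K ^ 3 * 0)) :=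
    (Continuous.tendsto (by fun_prop) 0).mono_left nhdsWithin_le_nhds
  have lim2 : Tendsto (fun s : ℝ => n * D s + n ^ 2 * s ^ 2 * D s ^ 2)
      (nhdsWithin 0 (Set.Ioi 0)) (nhds (n * D 0 + n ^ 2 * 0 ^ 2 * D 0 ^ 2)) :=
    (Continuous.tendsto (by fun_prop : Continuous fun s : ℝ =>
      n * D s + n ^ 2 * s ^ 2 * D s ^ 2) 0).mono_left nhdsWithin_le_nhds
  have hfin := le_of_tendsto_of_tendsto lim1 lim2 main
  simp only [hD, mul_zero, zero_mul, sub_zero, add_zero, ne_eq, OfNat.ofNat_ne_zero,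
    not_false_eq_true, zero_pow] at hfin
  have : (n : ℝ) * (n * V) ≤ n * (V + G) := by linarith
  linarith [le_of_mul_le_mul_left this hnpos]

theorem exponent_inequality {r : ℝ} (hr : 1 ≤ r) :
    r / (2 * (r + 2)) + 1.05 * (r / (2 * (r + 1))) * ((r + 7) / 4 / r +
      (r + 7) / (r + 3) * (r / (2 * (r + 2))) ^ 2 * 2.4675) ≤ 1 := by
  obtain ⟨t, ht, rfl⟩ : ∃ t, 0 ≤ t ∧ r = 1 + t := ⟨r - 1, by linarith, by ring⟩
  rw [← sub_nonneg]
  have : 1 - ((1 + t) / (2 * ((1 + t) + 2)) + 1.05 * ((1 + t) / (2 * ((1 + t) + 1))) *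
      (((1 + t) + 7) / 4 / (1 + t) +
      ((1 + t) + 7) / ((1 + t) + 3) * ((1 + t) / (2 * ((1 + t) + 2))) ^ 2 * 2.4675)) =
      (8 * (t + 2) * (t + 3) ^ 2 * (t + 4) - 4 * (1 + t) * (t + 2) * (t + 3) * (t + 4)
        - 1.05 * (t + 8) * (t + 3) ^ 2 * (t + 4) - 1.05 * 2.4675 * (1 + t) ^ 3 * (t + 8)) /
      (8 * (t + 2) * (t + 3) ^ 2 * (t + 4)) := by
    have h1 : (1 + t) ≠ 0 := by positivity
    have h2 : (1 + t) + 1 ≠ 0 := by positivity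
    have h3 : (1 + t) + 2 ≠ 0 := by positivity
    have h4 : (1 + t) + 3 ≠ 0 := by positivity
    have h5 : t + 2 ≠ 0 := by positivity
    have h6 : t + 3 ≠ 0 := by positivity
    have h7 : t + 4 ≠ 0 := by positivity
    field_simp
    ring
  rw [this]
  refine div_nonneg ?_ (by positivity)
  ring_nf
  positivity

/-- The exponential bound, for a function on the sphere satisfying an Urysohn-type inequality. -/
theorem integral_exp_le_of_integral_exp_pow_le {n : ℕ} (hn : 2 ≤ n)
    {f g : sphere (0 : E n) 1 → ℝ} (hf : Continuous f) (hg : Continuous g) (hg0 : ∀ θ, 0 ≤ g θ)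
    (hfπ : ∀ θ, f θ ≤ Real.pi ^ 2 / 4) (hgπ : ∀ θ, g θ ≤ Real.pi ^ 2 / 4)
    (hmean : ∫ θ, f θ ∂unifSphere n = 0)
    (h : ∀ s : ℝ, 0 ≤ s → s < 1 → ∫ θ, Real.exp (n * s * f θ) ∂unifSphere n ≤
      (∫ θ, Real.exp (s * f θ + s ^ 2 / (2 * (1 - s)) * g θ) ∂unifSphere n) ^ n) :
    ∫ θ, Real.exp (((n : ℝ) - 1) / 2 * f θ) ∂unifSphere n ≤
      Real.exp (((n : ℝ) - 1) / 2 * ∫ θ, g θ ∂unifSphere n) := by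
  have hn0 : n ≠ 0 := by omega
  have poincare := poincare_of_integral_exp_pow_le hn0 hf hg hg0 hmean h
  obtain ⟨r, hr, hnr⟩ : ∃ r : ℝ, 1 ≤ r ∧ (n : ℝ) = r + 1 := by
    have : (2 : ℝ) ≤ n := by exact_mod_cast hn
    exact ⟨n - 1, by linarith, by ring⟩
  have hr0 : 0 < r := by linarith
  rw [show (n : ℝ) - 1 = r by linarith] at poincare ⊢
  set V := ∫ θ, f θ ^ 2 ∂unifSphere n with hV
  set G := ∫ θ, g θ ∂unifSphere n with hG
  have hG0 : 0 ≤ G := integral_nonneg hg0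
  have hVG : V ≤ G / r := (le_div_iff₀ hr0).2 (by linarith)
  set c := r / (2 * (r + 1)) with hc
  set q := r / (2 * (r + 2)) with hq
  have hc0 : 0 < c := by positivity
  have hq0 : 0 < q := by positivity
  have hc1 : c ≤ 1 / 2 := by rw [hc, div_le_iff₀ (by positivity)]; linarith
  have hq1 : q ≤ 1 / 2 := by rw [hq, div_le_iff₀ (by positivity)]; linarith
  have hb : c ^ 2 / (2 * (1 - c)) = c * q := by
    have : 1 - c = (r + 2) / (2 * (r + 1)) := by rw [hc]; field_simp; ring
    rw [this, hc, hq]; field_simp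
  have hnc : (n : ℝ) * c = r / 2 := by rw [hnr, hc]; field_simp
  have hU := h c hc0.le (by linarith)
  rw [hb, hnc] at hU
  have hexp : ∫ θ, Real.exp (c * f θ + c * q * g θ) ∂unifSphere n ≤ 1 + c * G := by
    have hint := integral_quadratic_combination hn0 hf hg 1 c (1.05 * ((r + 7) / 4 * c ^ 2))
      (c * q + 1.05 * ((r + 7) / (r + 3) * (c * q) ^ 2 * 2.4675))
    rw [hmean, ← hV, ← hG] at hint
    have hmono := integral_mono (μ := unifSphere n)
      (f := fun θ => Real.exp (c * f θ + c * q * g θ))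
      (g := fun θ => 1 + c * f θ + 1.05 * ((r + 7) / 4 * c ^ 2) * f θ ^ 2 +
        (c * q + 1.05 * ((r + 7) / (r + 3) * (c * q) ^ 2 * 2.4675)) * g θ)
      (integrable_of_continuous_sphere hn0 (by fun_prop))
      (integrable_of_continuous_sphere hn0 (by fun_prop)) fun θ => by
        have hfθ := (hfπ θ).trans pi_sq_div_four_le
        have hgθ := (hgπ θ).trans pi_sq_div_four_le
        have hgθ0 := hg0 θ
        have e1 : c * f θ ≤ 1 / 2 * 2.4675 :=
          (mul_le_mul_of_nonneg_left hfθ hc0.le).trans (by gcongr)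
        have e2 : c * q * g θ ≤ 1 / 2 * (1 / 2) * 2.4675 := by gcongr
        have e3 := exp_le_one_add_add_mul_sq (x := c * f θ + c * q * g θ) (by
          norm_num at e1 e2 ⊢; linarith)
        have e4 : (c * f θ + c * q * g θ) ^ 2 ≤
            (r + 7) / 4 * (c * f θ) ^ 2 + (r + 7) / (r + 3) * (c * q * g θ) ^ 2 := by
          have : (r + 7) / 4 * (c * f θ) ^ 2 + (r + 7) / (r + 3) * (c * q * g θ) ^ 2 -
              (c * f θ + c * q * g θ) ^ 2 =
              ((r + 3) * (c * f θ) - 4 * (c * q * g θ)) ^ 2 / (4 * (r + 3)) := by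
            field_simp
            ring
          have : 0 ≤ ((r + 3) * (c * f θ) - 4 * (c * q * g θ)) ^ 2 / (4 * (r + 3)) := by positivity
          linarith
        have e5 : (r + 7) / (r + 3) * (c * q * g θ) ^ 2 ≤
            (r + 7) / (r + 3) * (c * q) ^ 2 * 2.4675 * g θ := by
          calc (r + 7) / (r + 3) * (c * q * g θ) ^ 2
              = (r + 7) / (r + 3) * (c * q) ^ 2 * g θ * g θ := by ring
            _ ≤ (r + 7) / (r + 3) * (c * q) ^ 2 * 2.4675 * g θ := by gcongr
        simp only
        linarith
    refine hmono.trans (hint.le.trans ?_)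
    have key := mul_le_mul_of_nonneg_left (exponent_inequality hr) (mul_nonneg hc0.le hG0)
    rw [← hc, ← hq] at key
    have hVc : 1.05 * ((r + 7) / 4 * c ^ 2) * V ≤ 1.05 * ((r + 7) / 4 * c ^ 2) * (G / r) := by
      gcongr
    calc _ ≤ 1 + c * 0 + 1.05 * ((r + 7) / 4 * c ^ 2) * (G / r) +
          (c * q + 1.05 * ((r + 7) / (r + 3) * (c * q) ^ 2 * 2.4675)) * G := by gcongr
      _ = 1 + c * G * (q + 1.05 * c * ((r + 7) / 4 / r + (r + 7) / (r + 3) * q ^ 2 * 2.4675)) := by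
        field_simp
        ring
      _ ≤ _ := by linarith
  calc ∫ θ, Real.exp (r / 2 * f θ) ∂unifSphere n ≤ _ := hU
    _ ≤ Real.exp (c * G) ^ n := by
      refine pow_le_pow_left₀ (integral_nonneg fun θ => (Real.exp_pos _).le) (hexp.trans ?_) n
      linarith [Real.add_one_le_exp (c * G)]
    _ = Real.exp (r / 2 * G) := by rw [← Real.exp_nat_mul, ← mul_assoc, hnc]

/-- **Corollary 3.2, (3.2) (Statement 6).** Sharpened exponential bound on the sphere
via the spherical Hessian. -/
theorem log_exp_bound_spherical_hessian
    {n : ℕ} (hn : 2 ≤ n) (f : E n → ℝ) (U : Set (E n)) (hU : IsOpen U)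
    (hUS : Metric.sphere (0 : E n) 1 ⊆ U) (hf : ContDiffOn ℝ 2 f U)
    (hmean : ∫ θ, f θ ∂sphMeasure n = 0)
    (hop : ∀ θ ∈ Metric.sphere (0 : E n) 1, ‖sHess f θ‖ ≤ 1) :
    Real.log (∫ θ, Real.exp (((n : ℝ) - 1) / 2 * f θ) ∂sphMeasure n) ≤
      ((n : ℝ) - 1) / 2 * ∫ θ, ‖sgrad f θ‖ ^ 2 ∂sphMeasure n := by
  have hn0 : n ≠ 0 := by omega
  have := isProbabilityMeasure_unifSphere hn0
  have hT := sphericalTaylorBound_of_norm_sHess_le hU hUS hf hop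
  have hc := continuous_restrict_sphere hUS hf
  have hg := continuous_sgrad_restrict_sphere hU hUS hf
  rw [integral_sphMeasure] at hmean ⊢
  rw [integral_sphMeasure fun θ => ‖sgrad f θ‖ ^ 2]
  have hpos : 0 < ∫ θ : sphere (0 : E n) 1, Real.exp (((n : ℝ) - 1) / 2 * f θ) ∂unifSphere n :=
    integral_exp_pos (integrable_of_continuous_sphere hn0 (hc.const_mul _).rexp)
  rw [Real.log_le_iff_le_exp hpos]
  refine integral_exp_le_of_integral_exp_pow_le hn hc (hg.norm.pow 2) (fun θ => sq_nonneg _)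
    (hT.le_of_integral_eq_zero hn hc hmean) (fun θ => ?_) hmean
    fun s hs hs' => hT.integral_exp_pow_le hn hc hg hs hs'
  calc ‖sgrad f θ‖ ^ 2 ≤ (Real.pi / 2) ^ 2 := by
        gcongr
        exact hT.norm_sgrad_le (by simp)
    _ = Real.pi ^ 2 / 4 := by ring

end SecondOrderConc
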